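/- Let t ≥ 2 and let r ∈ ℂᵗ satisfy |r_i|² < Σ_{j ≠ i} |r_j|² for every index i. Let d ∈ ℝᵗ satisfy d_i ≥ 0 for all i and d_i·d_j ≥ |r_i|²·|r_j|² for all i ≠ j. Then Σ_i d_i ≥ Σ_i |r_i|², with equality if and only if d_i = |r_i|² for all i. (In particular, the diagonal of r r* is the unique optimizer of the trace-minimization matrix completion problem (14) given all off-diagonal magnitudes |r_i||r_j|.) -/

import Mathlib

open Finset

/-!
Lowering one entry `d k` below `a k` forces the other entries to compensate: summing the product
constraints over `j ≠ k` gives `a k * S ≤ d k * D`, where `S` and `D` are the sums of `a` and `d`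
over the other indices. As `d k < a k < S`, the point `d k` lies to the left of both roots of
`(X - a k) * (X - S)`, and positivity of this quadratic there says exactly that `d k + D` exceeds
`a k + S`. So a `d` whose sum does not exceed that of `a` dominates `a` entrywise, hence equals it.
-/

section

variable {ι R : Type*} [CommRing R] [LinearOrder R] [IsStrictOrderedRing R]

lemma add_lt_add_of_lt_of_lt_of_mul_le_mul {a b x y : R} (hx : 0 ≤ x) (hxa : x < a) (hxb : x < b)
    (hmul : a * b ≤ x * y) : a + b < x + y := by
  have hpos : 0 < x * (x + y - (a + b)) :=
    calc
      0 < (a - x) * (b - x) := mul_pos (sub_pos.2 hxa) (sub_pos.2 hxb)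
      _ = a * b - x * (a + b - x) := by ring
      _ ≤ x * y - x * (a + b - x) := sub_le_sub_right hmul _
      _ = x * (x + y - (a + b)) := by ring
  exact sub_pos.1 (pos_of_mul_pos_right hpos hx)

variable [DecidableEq ι] {s : Finset ι} {a d : ι → R}

lemma sum_lt_sum_of_lt_of_mul_le_mul {k : ι} (hk : k ∈ s) (ha : a k < ∑ j ∈ s.erase k, a j)
    (hd : 0 ≤ d k) (hmul : ∀ j ∈ s, k ≠ j → a k * a j ≤ d k * d j) (hlt : d k < a k) :
    ∑ i ∈ s, a i < ∑ i ∈ s, d i := by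
  have hsum : a k * ∑ j ∈ s.erase k, a j ≤ d k * ∑ j ∈ s.erase k, d j := by
    rw [mul_sum, mul_sum]
    exact sum_le_sum fun j hj ↦ hmul j (mem_of_mem_erase hj) (ne_of_mem_erase hj).symm
  rw [← add_sum_erase s a hk, ← add_sum_erase s d hk]
  exact add_lt_add_of_lt_of_lt_of_mul_le_mul hd hlt (hlt.trans ha) hsum

theorem trace_min_matrix_completion_general (ha : ∀ i ∈ s, a i < ∑ j ∈ s.erase i, a j)
    (hd : ∀ i ∈ s, 0 ≤ d i) (hmul : ∀ i ∈ s, ∀ j ∈ s, i ≠ j → a i * a j ≤ d i * d j) :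
    ∑ i ∈ s, a i ≤ ∑ i ∈ s, d i ∧
      (∑ i ∈ s, d i = ∑ i ∈ s, a i ↔ ∀ i ∈ s, d i = a i) := by
  have hdom (hle : ∑ i ∈ s, d i ≤ ∑ i ∈ s, a i) : ∀ i ∈ s, a i ≤ d i := fun i hi ↦
    le_of_not_gt fun hlt ↦
      hle.not_gt (sum_lt_sum_of_lt_of_mul_le_mul hi (ha i hi) (hd i hi) (hmul i hi) hlt)
  refine ⟨le_of_not_gt fun hlt ↦ hlt.not_ge (sum_le_sum (hdom hlt.le)), fun heq i hi ↦ ?_,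
    sum_congr rfl⟩
  exact ((sum_eq_sum_iff_of_le (hdom heq.le)).1 heq.symm i hi).symm

end

/-- Let `t ≥ 2` and `r ∈ ℂᵗ` with `|r_i|² < Σ_{j ≠ i} |r_j|²` for every `i`.  If `d ∈ ℝᵗ`
satisfies `d_i ≥ 0` and `d_i d_j ≥ |r_i|²|r_j|²` for all `i ≠ j` (the 2×2 PSD constraints of
the matrix-completion program), then `Σ d_i ≥ Σ |r_i|²`, with equality iff `d_i = |r_i|²`
for all `i`. -/
theorem trace_min_matrix_completion
    (t : ℕ) (ht : 2 ≤ t) (r : Fin t → ℂ)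
    (hr : ∀ i, ‖r i‖ ^ 2 < ∑ j ∈ Finset.univ.erase i, ‖r j‖ ^ 2)
    (d : Fin t → ℝ) (hd0 : ∀ i, 0 ≤ d i)
    (hd : ∀ i j, i ≠ j → ‖r i‖ ^ 2 * ‖r j‖ ^ 2 ≤ d i * d j) :
    (∑ i, ‖r i‖ ^ 2) ≤ ∑ i, d i ∧
      ((∑ i, d i = ∑ i, ‖r i‖ ^ 2) ↔ ∀ i, d i = ‖r i‖ ^ 2) := by
  simpa using trace_min_matrix_completion_general (s := univ) (fun i _ ↦ hr i) (fun i _ ↦ hd0 i)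
    fun i _ j _ ↦ hd i j
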